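/- Let π: O(G) → O(H) be a surjective Hopf algebra morphism with O(G) cosemisimple such that A := O(G/H) = O(H\G) is a Hopf subalgebra of O(G), and set O(K) := O(G)/O(G)A⁻ where A⁻ = A ∩ ker ε (a Hopf algebra quotient, cosemisimple, through which π factors as O(G) → O(K) → O(H)). Then every simple right O(K)-comodule whose restriction to O(H) contains a nonzero invariant vector is trivial; equivalently O(K/H) = O(H\K) = k. -/

import Mathlib

/- Common infrastructure: right comodules over coalgebras, simplicity,
cosemisimplicity, subcoalgebras, adjoint coactions, normality, etc. -/

open TensorProduct

universe u

namespace QG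

variable (k : Type u) [Field k]

section Coalg

variable (C : Type u) [AddCommGroup C] [Module k C] [Coalgebra k C]

/-- `ρ : V →ₗ[k] V ⊗[k] C` is a (coassociative, counital) right coaction. -/
structure IsComod {V : Type u} [AddCommGroup V] [Module k V]
    (ρ : V →ₗ[k] V ⊗[k] C) : Prop where
  coassoc : ∀ v : V, ρ.rTensor C (ρ v) =
    (TensorProduct.assoc k V C C).symm.toLinearMap
      ((Coalgebra.comul (R := k) (A := C)).lTensor V (ρ v))
  counit : ∀ v : V, (TensorProduct.rid k V)
      ((Coalgebra.counit (R := k) (A := C)).lTensor V (ρ v)) = v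

/-- A submodule `U ≤ V` is a subcomodule if the coaction restricts to it,
i.e. maps `U` into the image of `U ⊗ C` in `V ⊗ C`. -/
def IsSubcomod {V : Type u} [AddCommGroup V] [Module k V]
    (ρ : V →ₗ[k] V ⊗[k] C) (U : Submodule k V) : Prop :=
  ∀ u ∈ U, ρ u ∈ LinearMap.range ((U.subtype).rTensor C)

/-- A simple subcomodule: a nonzero subcomodule with no nonzero proper
subcomodules below it. -/
def IsSimpleSubcomod {V : Type u} [AddCommGroup V] [Module k V]
    (ρ : V →ₗ[k] V ⊗[k] C) (U : Submodule k V) : Prop :=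
  IsSubcomod k C ρ U ∧ U ≠ ⊥ ∧
    ∀ U' : Submodule k V, U' ≤ U → IsSubcomod k C ρ U' → U' = ⊥ ∨ U' = U

/-- A comodule is simple if it is simple as a subcomodule of itself. -/
def IsSimpleComod {V : Type u} [AddCommGroup V] [Module k V]
    (ρ : V →ₗ[k] V ⊗[k] C) : Prop :=
  IsSimpleSubcomod k C ρ ⊤

/-- Morphisms of right `C`-comodules. -/
def IsComodHom {V W : Type u} [AddCommGroup V] [Module k V]
    [AddCommGroup W] [Module k W]
    (ρV : V →ₗ[k] V ⊗[k] C) (ρW : W →ₗ[k] W ⊗[k] C) (f : V →ₗ[k] W) : Prop :=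
  ρW ∘ₗ f = (f.rTensor C) ∘ₗ ρV

/-- `C` is cosemisimple: every right `C`-comodule is an (internal) direct sum
of simple subcomodules. -/
def IsCosemisimple : Prop :=
  ∀ (V : Type u) [AddCommGroup V] [Module k V]
    (ρ : V →ₗ[k] V ⊗[k] C), IsComod k C ρ →
    ∃ (ι : Type u) (U : ι → Submodule k V),
      (∀ i, IsSimpleSubcomod k C ρ (U i)) ∧
      iSupIndep U ∧ (⨆ i, U i) = ⊤

/-- Subcoalgebras of `C`, as submodules. -/
def IsSubcoalgebra (D : Submodule k C) : Prop :=
  ∀ x ∈ D, Coalgebra.comul (R := k) x ∈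
    LinearMap.range (TensorProduct.map D.subtype D.subtype)

/-- Simple subcoalgebras: nonzero ones with no nonzero proper subcoalgebras. -/
def IsSimpleSubcoalgebra (D : Submodule k C) : Prop :=
  IsSubcoalgebra k C D ∧ D ≠ ⊥ ∧
    ∀ D' : Submodule k C, D' ≤ D → IsSubcoalgebra k C D' → D' = ⊥ ∨ D' = D

/-- The coefficient space of a comodule: the smallest submodule `D ≤ C` such
that the coaction factors through `V ⊗ D`.  For a simple comodule this is its
coefficient coalgebra. -/
def coeffSpace {V : Type u} [AddCommGroup V] [Module k V]
    (ρ : V →ₗ[k] V ⊗[k] C) : Submodule k C :=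
  sInf {D : Submodule k C | ∀ v : V, ρ v ∈ LinearMap.range ((D.subtype).lTensor V)}

/-- Corestriction of a coaction along a linear map of coalgebras `π : C → D`. -/
noncomputable def cores {D : Type u} [AddCommGroup D] [Module k D]
    {V : Type u} [AddCommGroup V] [Module k V]
    (π : C →ₗ[k] D) (ρ : V →ₗ[k] V ⊗[k] C) : V →ₗ[k] V ⊗[k] D :=
  (π.lTensor V) ∘ₗ ρ

end Coalg

section Bialg

variable (H : Type u) [Ring H] [Bialgebra k H]

/-- An invariant vector for a coaction of a bialgebra. -/
def IsInvariant {V : Type u} [AddCommGroup V] [Module k V]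
    (ρ : V →ₗ[k] V ⊗[k] H) (v : V) : Prop :=
  ρ v = v ⊗ₜ[k] (1 : H)

/-- The tensor product coaction on `V ⊗ W` for a bialgebra `H`:
`v ⊗ w ↦ (v₀ ⊗ w₀) ⊗ v₁w₁`. -/
noncomputable def tensorCoact {V W : Type u}
    [AddCommGroup V] [Module k V] [AddCommGroup W] [Module k W]
    (ρV : V →ₗ[k] V ⊗[k] H) (ρW : W →ₗ[k] W ⊗[k] H) :
    (V ⊗[k] W) →ₗ[k] (V ⊗[k] W) ⊗[k] H :=
  ((LinearMap.mul' k H).lTensor (V ⊗[k] W)) ∘ₗ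
    (TensorProduct.tensorTensorTensorComm k V H W H).toLinearMap ∘ₗ
    (TensorProduct.map ρV ρW)

/-- `O(G/H)`: the right coinvariants `{x | (id ⊗ π)Δ(x) = x ⊗ 1}` of a
quotient map `π`. -/
noncomputable def quotientSpaceLeft {B : Type u} [AddCommGroup B] [Module k B] [One B]
    (π : H →ₗ[k] B) : Submodule k H :=
  LinearMap.ker ((π.lTensor H) ∘ₗ (Coalgebra.comul (R := k) (A := H)) -
    (TensorProduct.mk k H B).flip 1)

/-- `O(H\G)`: the left coinvariants `{x | (π ⊗ id)Δ(x) = 1 ⊗ x}`. -/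
noncomputable def quotientSpaceRight {B : Type u} [AddCommGroup B] [Module k B] [One B]
    (π : H →ₗ[k] B) : Submodule k H :=
  LinearMap.ker ((π.rTensor H) ∘ₗ (Coalgebra.comul (R := k) (A := H)) -
    (TensorProduct.mk k B H) 1)

end Bialg

section Hopf

variable (H : Type u) [Ring H] [HopfAlgebra k H]

/-- Iterated comultiplication `x ↦ x₁ ⊗ (x₂ ⊗ x₃)`. -/
noncomputable def comul2 : H →ₗ[k] H ⊗[k] (H ⊗[k] H) :=
  ((Coalgebra.comul (R := k) (A := H)).lTensor H) ∘ₗ (Coalgebra.comul (R := k) (A := H))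

/-- The right adjoint coaction `x ↦ x₂ ⊗ S(x₁)x₃`. -/
noncomputable def adR : H →ₗ[k] H ⊗[k] H :=
  ((LinearMap.mul' k H).lTensor H) ∘ₗ
    (TensorProduct.assoc k H H H).toLinearMap ∘ₗ
    (((TensorProduct.comm k H H).toLinearMap).rTensor H) ∘ₗ
    (TensorProduct.assoc k H H H).symm.toLinearMap ∘ₗ
    ((HopfAlgebra.antipode (R := k) (A := H)).rTensor (H ⊗[k] H)) ∘ₗ
    comul2 k H

/-- The left adjoint coaction `x ↦ x₁S(x₃) ⊗ x₂` (a left coaction, with the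
coacting tensorand on the left). -/
noncomputable def adL : H →ₗ[k] H ⊗[k] H :=
  ((LinearMap.mul' k H).rTensor H) ∘ₗ
    (TensorProduct.assoc k H H H).symm.toLinearMap ∘ₗ
    (((TensorProduct.comm k H H).toLinearMap).lTensor H) ∘ₗ
    (((HopfAlgebra.antipode (R := k) (A := H)).lTensor H).lTensor H) ∘ₗ
    comul2 k H

variable {B : Type u} [AddCommGroup B] [Module k B]

/-- `π : O(G) → O(H)` is right-normal: it is a morphism of right
`O(G)`-comodules for the right adjoint coaction, i.e. the right adjoint
coaction descends along `π`. -/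
def IsRightNormal (π : H →ₗ[k] B) : Prop :=
  ∃ ρ : B →ₗ[k] B ⊗[k] H, ρ ∘ₗ π = (π.rTensor H) ∘ₗ adR k H

/-- `π : O(G) → O(H)` is left-normal: the left adjoint coaction descends
along `π`. -/
def IsLeftNormal (π : H →ₗ[k] B) : Prop :=
  ∃ lam : B →ₗ[k] H ⊗[k] B, lam ∘ₗ π = (π.lTensor H) ∘ₗ adL k H

end Hopf

end QG

namespace QG

variable (k : Type u) [Field k]

section Coalg2

variable (C : Type u) [AddCommGroup C] [Module k C] [Coalgebra k C]

/-- A bundled simple right `C`-comodule. -/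
structure SimpleComodule where
  V : Type u
  [addCommGroup : AddCommGroup V]
  [module : Module k V]
  ρ : V →ₗ[k] V ⊗[k] C
  isComod : IsComod k C ρ
  isSimple : IsSimpleComod k C ρ

attribute [instance] SimpleComodule.addCommGroup SimpleComodule.module

/-- A simple comodule `(T, ρT)` is a constituent of a comodule `(V, ρV)`
(over a cosemisimple coalgebra) iff there is a nonzero comodule map `T → V`. -/
def IsConstituent {T V : Type u} [AddCommGroup T] [Module k T]
    [AddCommGroup V] [Module k V]
    (ρT : T →ₗ[k] T ⊗[k] C) (ρV : V →ₗ[k] V ⊗[k] C) : Prop :=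
  ∃ f : T →ₗ[k] V, f ≠ 0 ∧ IsComodHom k C ρT ρV f

/-- Isomorphism of (simple) comodules. -/
def comodIsoRel (X Y : SimpleComodule k C) : Prop :=
  ∃ e : X.V ≃ₗ[k] Y.V, IsComodHom k C X.ρ Y.ρ e.toLinearMap

/-- The set `Ĉ` of isomorphism classes of simple right `C`-comodules. -/
def SimpleComodQuot := Quot (comodIsoRel k C)

/-- The isomorphism class of a simple comodule. -/
def SimpleComodule.cls (X : SimpleComodule k C) : SimpleComodQuot k C :=
  Quot.mk _ X

/-- Group-like elements of a coalgebra; these correspond to the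
one-dimensional comodules, i.e. to characters. -/
def IsGroupLike (a : C) : Prop :=
  Coalgebra.counit (R := k) (A := C) a = (1 : k) ∧
    Coalgebra.comul (R := k) (A := C) a = a ⊗ₜ[k] a

/-- A linear map `φ : C → Z` out of a coalgebra is central if
`φ(x₁) ⊗ x₂ = φ(x₂) ⊗ x₁`. -/
def IsCentralMap {Z : Type u} [AddCommGroup Z] [Module k Z] (φ : C →ₗ[k] Z) : Prop :=
  (φ.rTensor C) ∘ₗ (Coalgebra.comul (R := k) (A := C)) =
    (φ.rTensor C) ∘ₗ (TensorProduct.comm k C C).toLinearMap ∘ₗ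
      (Coalgebra.comul (R := k) (A := C))

/-- The simple comodule `X` has "central character" `g` with respect to the
quotient map `γ : C → Z`: corestricted along `γ`, the coaction on `X` is a sum
of copies of the character `g`. -/
def HasCentralChar {Z : Type u} [AddCommGroup Z] [Module k Z]
    (γ : C →ₗ[k] Z) (X : SimpleComodule k C) (g : Z) : Prop :=
  ∀ v : X.V, cores k C γ X.ρ v = v ⊗ₜ[k] g

end Coalg2

/-- The k-span of the set of products `g * a`, `a ∈ Am`; for `Am` a submodule
this is the left ideal generated by `Am`. -/
def leftIdealGen {G : Type u} [Ring G] [Module k G] (Am : Submodule k G) :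
    Submodule k G :=
  Submodule.span k {x : G | ∃ g : G, ∃ a ∈ Am, x = g * a}

end QG

namespace QG

/-- A Hopf subalgebra, as a submodule. -/
def IsHopfSubalgebra (k : Type u) [Field k] (G : Type u) [Ring G] [HopfAlgebra k G]
    (D : Submodule k G) : Prop :=
  (1 : G) ∈ D ∧ (∀ x ∈ D, ∀ y ∈ D, x * y ∈ D) ∧ IsSubcoalgebra k G D ∧
    D.map (HopfAlgebra.antipode (R := k) (A := G)) ≤ D

end QG

/-
Cosemisimplicity of `O(G)` splits off `A` by a central idempotent `φ` of the dual algebra `O(G)*`.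
For `a ∈ A` the element `φ(x₁a)x₂ = φ(x₁a₁)x₂a₂S(a₃)` lies in `A`, where `φ` agrees with `ε`; hence
`φ(xa) = φ(x)ε(a)`. So `φ` kills `O(G)A⁻` and descends to a normalized two-sided invariant
functional on `O(K)`, again written `φ`.

If `f` is an `H`-invariant functional on `O(K)`, then its pullback along `q` has all its translates
`f(q(x₁))x₂` in `O(H\G) = A`, which `q` sends to scalars; so `f` is already `K`-invariant, hence a
multiple of `φ`. For `y ∈ O(K/H)` the functional `x ↦ φ(xy)` is `H`-invariant, whence
`φ(xy) = φ(x)φ(y)`. Applying this to `S(y₁)y₂ = ε(y)1` gives `ε(y) = φ(y)`, and applying that to all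
`f(y₁)y₂` gives `y = φ(y)1`. The other side is symmetric, and the matrix coefficients of an
`O(K)`-comodule at an `H`-invariant vector lie in `O(K/H)`.
-/

namespace QG

open Coalgebra HopfAlgebra Module TensorProduct WithConv

section Slices

variable {k V W : Type*} [Field k] [AddCommGroup V] [Module k V] [AddCommGroup W] [Module k W]

theorem dual_ext {x y : V} (h : ∀ f : Dual k V, f x = f y) : x = y :=
  eval_apply_injective k (LinearMap.ext h)

theorem ext_lid_rTensor {s t : V ⊗[k] W}
    (h : ∀ f : Dual k V,
      TensorProduct.lid k W (f.rTensor W s) = TensorProduct.lid k W (f.rTensor W t)) :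
    s = t := by
  classical
  refine (equivFinsuppOfBasisLeft (N := W) (Basis.ofVectorSpace k V)).injective
    (Finsupp.ext fun i => ?_)
  rw [equivFinsuppOfBasisLeft_apply, equivFinsuppOfBasisLeft_apply]
  exact h _

theorem ext_rid_lTensor {s t : V ⊗[k] W}
    (h : ∀ f : Dual k W,
      TensorProduct.rid k V (f.lTensor V s) = TensorProduct.rid k V (f.lTensor V t)) :
    s = t := by
  classical
  refine (equivFinsuppOfBasisRight (M := V) (Basis.ofVectorSpace k W)).injective
    (Finsupp.ext fun i => ?_)
  rw [equivFinsuppOfBasisRight_apply, equivFinsuppOfBasisRight_apply]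
  exact h _

theorem mem_range_lTensor_subtype_iff {U : Submodule k W} {t : V ⊗[k] W} :
    t ∈ LinearMap.range (U.subtype.lTensor V) ↔
      ∀ f : Dual k V, TensorProduct.lid k W (f.rTensor W t) ∈ U := by
  classical
  constructor
  · rintro ⟨s, rfl⟩ f
    have : (TensorProduct.lid k W).toLinearMap ∘ₗ f.rTensor W ∘ₗ U.subtype.lTensor V =
        U.subtype ∘ₗ (TensorProduct.lid k U).toLinearMap ∘ₗ f.rTensor U := by
      ext; simp
    exact (congrArg (· ∈ U) (LinearMap.congr_fun this s)).mpr (Subtype.prop _)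
  · intro h
    set b := Basis.ofVectorSpace k V
    rw [← (equivFinsuppOfBasisLeft (N := W) b).symm_apply_apply t,
      equivFinsuppOfBasisLeft_symm_apply]
    refine Submodule.sum_mem _ fun i _ => ⟨b i ⊗ₜ ⟨equivFinsuppOfBasisLeft b t i, ?_⟩, by simp⟩
    rw [equivFinsuppOfBasisLeft_apply]
    exact h _

theorem mem_range_rTensor_subtype_iff {U : Submodule k V} {t : V ⊗[k] W} :
    t ∈ LinearMap.range (U.subtype.rTensor W) ↔
      ∀ f : Dual k W, TensorProduct.rid k V (f.lTensor V t) ∈ U := by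
  classical
  constructor
  · rintro ⟨s, rfl⟩ f
    have : (TensorProduct.rid k V).toLinearMap ∘ₗ f.lTensor V ∘ₗ U.subtype.rTensor W =
        U.subtype ∘ₗ (TensorProduct.rid k U).toLinearMap ∘ₗ f.lTensor U := by
      ext; simp
    exact (congrArg (· ∈ U) (LinearMap.congr_fun this s)).mpr (Subtype.prop _)
  · intro h
    set b := Basis.ofVectorSpace k W
    rw [← (equivFinsuppOfBasisRight (M := V) b).symm_apply_apply t,
      equivFinsuppOfBasisRight_symm_apply]
    refine Submodule.sum_mem _ fun i _ => ⟨⟨equivFinsuppOfBasisRight b t i, ?_⟩ ⊗ₜ b i, by simp⟩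
    rw [equivFinsuppOfBasisRight_apply]
    exact h _

end Slices

section DualAction

variable {k C V : Type u} [Field k] [AddCommGroup C] [Module k C]
  [AddCommGroup V] [Module k V]

/-- The map `v ↦ ξ(v₀)v₁` sending a vector of a right comodule to its matrix coefficient against
the functional `ξ`. -/
noncomputable def matrixCoeff (ρ : V →ₗ[k] V ⊗[k] C) (ξ : Dual k V) : V →ₗ[k] C :=
  (TensorProduct.lid k C).toLinearMap ∘ₗ ξ.rTensor C ∘ₗ ρ

/-- The operator `v ↦ v₀f(v₁)` by which a functional `f` on a coalgebra acts on a right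
comodule. -/
noncomputable def dualAct (ρ : V →ₗ[k] V ⊗[k] C) (f : Dual k C) : V →ₗ[k] V :=
  (TensorProduct.rid k V).toLinearMap ∘ₗ f.lTensor V ∘ₗ ρ

theorem apply_dualAct (ρ : V →ₗ[k] V ⊗[k] C) (ξ : Dual k V) (f : Dual k C) (v : V) :
    ξ (dualAct ρ f v) = f (matrixCoeff ρ ξ v) := by
  have : ξ ∘ₗ (TensorProduct.rid k V).toLinearMap ∘ₗ f.lTensor V =
      f ∘ₗ (TensorProduct.lid k C).toLinearMap ∘ₗ ξ.rTensor C := by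
    ext; simp [mul_comm]
  exact LinearMap.congr_fun this (ρ v)

theorem isSubcomod_iff_dualAct_mem {ρ : V →ₗ[k] V ⊗[k] C} {U : Submodule k V} :
    IsSubcomod k C ρ U ↔ ∀ f : Dual k C, ∀ u ∈ U, dualAct ρ f u ∈ U :=
  (forall₂_congr fun _ _ => mem_range_rTensor_subtype_iff).trans
    ⟨fun h f u hu => h u hu f, fun h u hu f => h f u hu⟩

variable [Coalgebra k C]

/-- The right hit action `x ↦ f(x₁)x₂` of a functional on a coalgebra. -/
noncomputable abbrev rightHit (f : Dual k C) : C →ₗ[k] C := matrixCoeff comul f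

/-- The left hit action `x ↦ x₁f(x₂)` of a functional on a coalgebra. -/
noncomputable abbrev leftHit (f : Dual k C) : C →ₗ[k] C := dualAct comul f

theorem apply_leftHit (f g : Dual k C) (x : C) : f (leftHit g x) = g (rightHit f x) :=
  apply_dualAct comul f g x

@[simp]
theorem rightHit_counit (x : C) : rightHit (counit (R := k)) x = x := by
  simp [matrixCoeff]

@[simp]
theorem leftHit_counit (x : C) : leftHit (counit (R := k)) x = x := by
  simp [dualAct]

@[simp]
theorem counit_rightHit (f : Dual k C) (x : C) : counit (R := k) (rightHit f x) = f x := by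
  rw [← apply_leftHit, leftHit_counit]

@[simp]
theorem counit_leftHit (f : Dual k C) (x : C) : counit (R := k) (leftHit f x) = f x := by
  rw [apply_leftHit, rightHit_counit]

theorem isComod_comul : IsComod k C (comul (R := k) (A := C)) where
  coassoc x := by simp
  counit x := by simp

namespace IsComod

variable {ρ : V →ₗ[k] V ⊗[k] C}

theorem apply_matrixCoeff_dualAct (hρ : IsComod k C ρ) (ξ : Dual k V) (f g : Dual k C) (v : V) :
    f (matrixCoeff ρ ξ (dualAct ρ g v)) = g (rightHit f (matrixCoeff ρ ξ v)) := by
  let ξf : Dual k (V ⊗[k] C) := f ∘ₗ (TensorProduct.lid k C).toLinearMap ∘ₗ ξ.rTensor C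
  let Φ : Dual k ((V ⊗[k] C) ⊗[k] C) := (TensorProduct.lid k k).toLinearMap ∘ₗ map ξf g
  have hleft : Φ ∘ₗ ρ.rTensor C =
      (f ∘ₗ matrixCoeff ρ ξ) ∘ₗ (TensorProduct.rid k V).toLinearMap ∘ₗ g.lTensor V := by
    ext; simp [Φ, ξf, matrixCoeff, mul_comm]
  have hΦ : Φ ∘ₗ (TensorProduct.assoc k V C C).symm.toLinearMap =
      g ∘ₗ ((TensorProduct.lid k C).toLinearMap ∘ₗ f.rTensor C) ∘ₗ
        (TensorProduct.lid k (C ⊗[k] C)).toLinearMap ∘ₗ ξ.rTensor (C ⊗[k] C) := by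
    ext; simp [Φ, ξf, mul_assoc]
  have hright : Φ ∘ₗ (TensorProduct.assoc k V C C).symm.toLinearMap ∘ₗ comul.lTensor V =
      (g ∘ₗ rightHit f) ∘ₗ (TensorProduct.lid k C).toLinearMap ∘ₗ ξ.rTensor C := by
    rw [← LinearMap.comp_assoc, hΦ]
    ext; simp [matrixCoeff]
  calc _ = Φ (ρ.rTensor C (ρ v)) := (LinearMap.congr_fun hleft (ρ v)).symm
    _ = _ := by rw [hρ.coassoc]; exact LinearMap.congr_fun hright (ρ v)

theorem rightHit_matrixCoeff (hρ : IsComod k C ρ) (ξ : Dual k V) (f : Dual k C) (v : V) :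
    rightHit f (matrixCoeff ρ ξ v) = matrixCoeff ρ (f ∘ₗ matrixCoeff ρ ξ) v :=
  dual_ext fun g =>
    (hρ.apply_matrixCoeff_dualAct ξ f g v).symm.trans (apply_dualAct ρ (f ∘ₗ matrixCoeff ρ ξ) g v)

theorem leftHit_matrixCoeff (hρ : IsComod k C ρ) (ξ : Dual k V) (f : Dual k C) (v : V) :
    leftHit f (matrixCoeff ρ ξ v) = matrixCoeff ρ ξ (dualAct ρ f v) :=
  dual_ext fun g => by rw [apply_leftHit, hρ.apply_matrixCoeff_dualAct]

theorem dualAct_dualAct (hρ : IsComod k C ρ) (f g : Dual k C) (v : V) :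
    dualAct ρ f (dualAct ρ g v) = dualAct ρ (f ∘ₗ leftHit g) v :=
  dual_ext fun ξ => by
    rw [apply_dualAct, ← hρ.leftHit_matrixCoeff, ← LinearMap.comp_apply,
      ← apply_dualAct ρ ξ (f ∘ₗ leftHit g)]

end IsComod

end DualAction

section FullyInvariant

variable {R M : Type*} [Ring R] [AddCommGroup M] [Module R M] [IsSemisimpleModule R M]
  {N : Submodule R M}

theorem exists_isCompl_isFullyInvariant (hN : N.IsFullyInvariant) :
    ∃ N' : Submodule R M, N'.IsFullyInvariant ∧ IsCompl N N' := by
  let o := OrderIso.setIsotypicComponents (R := R) (M := M)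
  have hc := o.isCompl (isCompl_compl (x := o.symm ⟨N, hN⟩))
  rw [o.apply_symm_apply] at hc
  exact ⟨_, Subtype.prop _, disjoint_iff.2 (congrArg Subtype.val hc.inf_eq_bot),
    codisjoint_iff.2 (congrArg Subtype.val hc.sup_eq_top)⟩

theorem exists_isProj_forall_commute (hN : N.IsFullyInvariant) :
    ∃ e : End R M, LinearMap.IsProj N e ∧ ∀ f : End R M, Commute e f := by
  obtain ⟨N', hN', hc⟩ := exists_isCompl_isFullyInvariant hN
  refine ⟨N.projection N' hc, ⟨Submodule.projection_apply_mem hc,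
    fun _ => Submodule.projection_apply_of_mem_left hc⟩, fun f =>
    (LinearMap.IsIdempotentElem.commute_iff ?_).2 ⟨?_, ?_⟩⟩
  · exact Submodule.isIdempotentElem_projection hc
  · simpa using! hN f
  · simpa using! hN' f

end FullyInvariant

section Cosemisimple

variable {k C : Type u} [Field k] [AddCommGroup C] [Module k C] [Coalgebra k C]

theorem ofConv_convMul (f g : WithConv (Dual k C)) :
    (f * g).ofConv = f.ofConv ∘ₗ leftHit g.ofConv := by
  have : f.ofConv ∘ₗ (TensorProduct.rid k C).toLinearMap ∘ₗ g.ofConv.lTensor C =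
      LinearMap.mul' k k ∘ₗ map f.ofConv g.ofConv := by
    ext; simp [mul_comm]
  exact LinearMap.ext fun x => (LinearMap.congr_fun this (comul x)).symm

/-- A coalgebra as a module over its convolution dual via the left hit action. -/
noncomputable instance hitModule : Module (WithConv (Dual k C)) C where
  smul f x := leftHit f.ofConv x
  one_smul := leftHit_counit
  mul_smul f g x := (congrArg (leftHit · x) (ofConv_convMul f g)).trans
    (isComod_comul.dualAct_dualAct f.ofConv g.ofConv x).symm
  smul_zero f := map_zero (leftHit f.ofConv)
  smul_add f := map_add (leftHit f.ofConv)
  add_smul f g x := by simp [HSMul.hSMul, dualAct, LinearMap.lTensor_add]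
  zero_smul x := by simp [HSMul.hSMul, dualAct, LinearMap.lTensor_zero]

theorem smul_eq_leftHit (f : WithConv (Dual k C)) (x : C) : f • x = leftHit f.ofConv x :=
  rfl

instance : IsScalarTower k (WithConv (Dual k C)) C where
  smul_assoc c f x := by simp [smul_eq_leftHit, dualAct, LinearMap.lTensor_smul]

theorem isSubcomod_comul_iff {U : Submodule k C} :
    IsSubcomod k C comul U ↔ ∃ M : Submodule (WithConv (Dual k C)) C, M.restrictScalars k = U := by
  rw [isSubcomod_iff_dualAct_mem]
  refine ⟨fun h => ⟨{ U with smul_mem' := fun f x hx => h f.ofConv x hx }, rfl⟩, ?_⟩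
  rintro ⟨M, rfl⟩ f x hx
  exact M.smul_mem (toConv f) hx

theorem IsSubcoalgebra.leftHit_mem {D : Submodule k C} (hD : IsSubcoalgebra k C D) (f : Dual k C)
    {x : C} (hx : x ∈ D) : leftHit f x ∈ D := by
  obtain ⟨t, ht⟩ := hD x hx
  refine mem_range_rTensor_subtype_iff.1 ⟨D.subtype.lTensor D t, ?_⟩ f
  rw [← ht, ← LinearMap.comp_apply, LinearMap.rTensor_comp_lTensor]

theorem IsSubcoalgebra.rightHit_mem {D : Submodule k C} (hD : IsSubcoalgebra k C D) (f : Dual k C)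
    {x : C} (hx : x ∈ D) : rightHit f x ∈ D := by
  obtain ⟨t, ht⟩ := hD x hx
  refine mem_range_lTensor_subtype_iff.1 ⟨D.subtype.rTensor D t, ?_⟩ f
  rw [← ht, ← LinearMap.comp_apply, LinearMap.lTensor_comp_rTensor]

theorem IsCosemisimple.isSemisimpleModule (h : IsCosemisimple k C) :
    IsSemisimpleModule (WithConv (Dual k C)) C := by
  obtain ⟨ι, U, hU, -, htop⟩ := h C comul isComod_comul
  choose M hM using fun i => isSubcomod_comul_iff.1 (hU i).1
  have hsimple (i : ι) : IsSimpleModule (WithConv (Dual k C)) (M i) := by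
    refine isSimpleModule_iff_isAtom.2
      ⟨fun hbot => (hU i).2.1 (by simp [← hM, hbot]), fun N hN => ?_⟩
    rcases (hU i).2.2 (N.restrictScalars k) (hM i ▸ hN.le) (isSubcomod_comul_iff.2 ⟨N, rfl⟩)
      with hN' | hN'
    · exact (Submodule.restrictScalars_eq_bot_iff ..).1 hN'
    · exact absurd (Submodule.restrictScalars_injective k _ _ (hN'.trans (hM i).symm)) hN.ne
  refine isSemisimpleModule_of_isSemisimpleModule_submodule' (p := M) inferInstance
    (Submodule.restrictScalars_injective k _ _ ?_)
  simp [Submodule.restrictScalars_iSup, hM, htop]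

/-- The functional `φ` is the support idempotent of the subcoalgebra `A`: a central element of the
convolution dual whose hit action projects the coalgebra onto `A`. -/
structure IsSupportIdempotent (A : Submodule k C) (φ : Dual k C) : Prop where
  leftHit_eq_rightHit : leftHit φ = rightHit φ
  isProj : LinearMap.IsProj A (rightHit φ)

theorem IsSupportIdempotent.apply_eq_counit {A : Submodule k C} {φ : Dual k C}
    (hφ : IsSupportIdempotent A φ) {a : C} (ha : a ∈ A) : φ a = counit a := by
  rw [← counit_rightHit, hφ.isProj.map_id a ha]

/-- The right hit action of a functional as an endomorphism of the module structure given by the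
left hit action. -/
noncomputable def rightHitEnd (f : Dual k C) : End (WithConv (Dual k C)) C :=
  { rightHit f with
    map_smul' := fun g x => (isComod_comul.leftHit_matrixCoeff f g.ofConv x).symm }

theorem apply_end_apply (e : End (WithConv (Dual k C)) C) (f : Dual k C) (x : C) :
    f (e x) = counit (R := k) (e (leftHit f x)) :=
  calc f (e x) = counit (R := k) (leftHit f (e x)) := (counit_leftHit f (e x)).symm
    _ = counit (R := k) (e (leftHit f x)) := congrArg _ (e.map_smul (toConv f) x).symm

theorem end_apply_eq_rightHit (e : End (WithConv (Dual k C)) C) (x : C) :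
    e x = rightHit (counit ∘ₗ e.restrictScalars k) x :=
  dual_ext fun f => by rw [apply_end_apply, ← apply_leftHit]; rfl

theorem IsCosemisimple.exists_isSupportIdempotent (h : IsCosemisimple k C) {A : Submodule k C}
    (hA : IsSubcoalgebra k C A) : ∃ φ : Dual k C, IsSupportIdempotent A φ := by
  have := h.isSemisimpleModule
  obtain ⟨M, rfl⟩ :=
    isSubcomod_comul_iff.1 (isSubcomod_iff_dualAct_mem.2 fun f _ => hA.leftHit_mem f)
  have hM : M.IsFullyInvariant := fun e x hx => by
    rw [Submodule.mem_comap, end_apply_eq_rightHit]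
    exact hA.rightHit_mem _ hx
  obtain ⟨e, he, hcomm⟩ := exists_isProj_forall_commute hM
  set φ : Dual k C := counit ∘ₗ e.restrictScalars k
  have hφ (x : C) : e x = rightHit φ x := end_apply_eq_rightHit e x
  have hproj : LinearMap.IsProj (M.restrictScalars k) (rightHit φ) :=
    ⟨fun x => by rw [← hφ]; exact he.map_mem x, fun a ha => (hφ a).symm.trans (he.map_id a ha)⟩
  refine ⟨φ, LinearMap.ext fun x => dual_ext (k := k) fun f => ?_, hproj⟩
  have hcomm' : e (rightHit f x) = rightHit f (e x) :=
    LinearMap.congr_fun (hcomm (rightHitEnd f)) x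
  calc f (leftHit φ x) = counit (R := k) (e (rightHit f x)) := apply_leftHit f φ x
    _ = f (rightHit φ x) := by rw [hcomm', counit_rightHit, hφ]

end Cosemisimple

section StrongInvariance

variable {k G : Type u} [Field k] [Ring G] [HopfAlgebra k G]

theorem convMul_comul_includeRight_antipode :
    toConv (comul (R := k) (A := G)) *
        toConv ((Algebra.TensorProduct.includeRight : G →ₐ[k] G ⊗[k] G).toLinearMap ∘ₗ antipode k) =
      toConv (Algebra.TensorProduct.includeLeft : G →ₐ[k] G ⊗[k] G).toLinearMap := by
  set ι₁ := (Algebra.TensorProduct.includeLeft : G →ₐ[k] G ⊗[k] G)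
  set ι₂ := (Algebra.TensorProduct.includeRight : G →ₐ[k] G ⊗[k] G)
  have hcomul :
      toConv (comul (R := k) (A := G)) = toConv ι₁.toLinearMap * toConv ι₂.toLinearMap := by
    have : LinearMap.mul' k (G ⊗[k] G) ∘ₗ map ι₁.toLinearMap ι₂.toLinearMap = LinearMap.id := by
      ext; simp [ι₁, ι₂]
    rw [LinearMap.convMul_def, ← LinearMap.comp_assoc, this, LinearMap.id_comp]
  have hinv : toConv ι₂.toLinearMap * toConv (ι₂.toLinearMap ∘ₗ antipode k) = 1 := by
    have := LinearMap.algHom_comp_convMul_distrib ι₂ (toConv (LinearMap.id (R := k) (M := G)))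
      (toConv (antipode k))
    rw [LinearMap.id_mul_antipode] at this
    exact (congrArg toConv this).symm.trans (by ext; simp)
  rw [hcomul, mul_assoc, hinv, mul_one]

theorem rightHit_comp_mulRight (f : Dual k G) (x a : G) :
    rightHit (f ∘ₗ LinearMap.mulRight k a) x =
      LinearMap.mul' k G (map (rightHit f ∘ₗ LinearMap.mulLeft k x) (antipode k) (comul a)) := by
  let Θ : G ⊗[k] G →ₗ[k] G := (TensorProduct.lid k G).toLinearMap ∘ₗ f.rTensor G
  have hΘ₁ : (TensorProduct.lid k G).toLinearMap ∘ₗ (f ∘ₗ LinearMap.mulRight k a).rTensor G =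
      Θ ∘ₗ LinearMap.mulRight k (a ⊗ₜ[k] (1 : G)) := by
    ext; simp [Θ]
  have hΘ₂ (c : G) : LinearMap.mulRight k c ∘ₗ Θ = Θ ∘ₗ LinearMap.mulRight k ((1 : G) ⊗ₜ[k] c) := by
    ext; simp [Θ]
  have hΘ₃ : Θ ∘ₗ LinearMap.mulLeft k (comul x) ∘ₗ LinearMap.mul' k (G ⊗[k] G) ∘ₗ
        map comul (Algebra.TensorProduct.includeRight.toLinearMap ∘ₗ antipode k) =
      LinearMap.mul' k G ∘ₗ map (rightHit f ∘ₗ LinearMap.mulLeft k x) (antipode k) := by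
    ext b c
    simpa [Θ, matrixCoeff, mul_assoc] using
      (LinearMap.congr_fun (hΘ₂ (antipode k c)) (comul (x * b))).symm
  have ha : a ⊗ₜ[k] (1 : G) = LinearMap.mul' k (G ⊗[k] G)
      (map comul (Algebra.TensorProduct.includeRight.toLinearMap ∘ₗ antipode k) (comul a)) :=
    (LinearMap.congr_fun (congrArg ofConv convMul_comul_includeRight_antipode) a).symm
  calc rightHit (f ∘ₗ LinearMap.mulRight k a) x = Θ (comul x * (a ⊗ₜ[k] (1 : G))) :=
        (LinearMap.congr_fun hΘ₁ (comul x)).trans rfl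
    _ = _ := by rw [ha]; exact LinearMap.congr_fun hΘ₃ (comul a)

theorem IsSupportIdempotent.rightHit_comp_mulRight_mem {A : Submodule k G} {φ : Dual k G}
    (hφ : IsSupportIdempotent A φ) (hA : IsHopfSubalgebra k G A) (x : G) {a : G} (ha : a ∈ A) :
    rightHit (φ ∘ₗ LinearMap.mulRight k a) x ∈ A := by
  obtain ⟨-, hmul, hsub, hantipode⟩ := hA
  obtain ⟨t, ht⟩ := hsub a ha
  rw [rightHit_comp_mulRight, ← ht]
  clear ht
  induction t with
  | zero => simp
  | tmul b c => exact hmul _ (hφ.isProj.map_mem (x * b)) _ (hantipode ⟨c, c.2, rfl⟩)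
  | add s t hs ht => simpa using! A.add_mem hs ht

theorem IsSupportIdempotent.apply_mul {A : Submodule k G} {φ : Dual k G}
    (hφ : IsSupportIdempotent A φ) (hA : IsHopfSubalgebra k G A) (x : G) {a : G} (ha : a ∈ A) :
    φ (x * a) = φ x * counit a := by
  set ψ : Dual k G := φ ∘ₗ LinearMap.mulRight k a
  have hφx : rightHit φ x ∈ A := hφ.isProj.map_mem x
  calc φ (x * a) = counit (R := k) (rightHit ψ x) := (counit_rightHit ψ x).symm
    _ = φ (rightHit ψ x) := (hφ.apply_eq_counit (hφ.rightHit_comp_mulRight_mem hA x ha)).symm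
    _ = ψ (rightHit φ x) := by rw [← apply_leftHit, hφ.leftHit_eq_rightHit]
    _ = counit (rightHit φ x * a) := hφ.apply_eq_counit (hA.2.1 _ hφx _ ha)
    _ = φ x * counit a := by rw [Bialgebra.counit_mul, counit_rightHit]

end StrongInvariance

section Corestriction

variable {k C B V : Type u} [Field k] [AddCommGroup C] [Module k C]
  [AddCommGroup B] [Module k B] [AddCommGroup V] [Module k V]

theorem matrixCoeff_cores (p : C →ₗ[k] B) (ρ : V →ₗ[k] V ⊗[k] C) (ξ : Dual k V) (v : V) :
    matrixCoeff (cores k C p ρ) ξ v = p (matrixCoeff ρ ξ v) := by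
  have : (TensorProduct.lid k B).toLinearMap ∘ₗ ξ.rTensor B ∘ₗ p.lTensor V =
      p ∘ₗ (TensorProduct.lid k C).toLinearMap ∘ₗ ξ.rTensor C := by
    ext; simp
  exact LinearMap.congr_fun this (ρ v)

theorem cores_eq_tmul_iff {p : C →ₗ[k] B} {ρ : V →ₗ[k] V ⊗[k] C} {v : V} {b : B} :
    cores k C p ρ v = v ⊗ₜ b ↔ ∀ ξ : Dual k V, p (matrixCoeff ρ ξ v) = ξ v • b := by
  refine ⟨fun h ξ => ?_, fun h => ext_lid_rTensor fun ξ => ?_⟩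
  · rw [← matrixCoeff_cores]; simp [matrixCoeff, h]
  · exact (matrixCoeff_cores p ρ ξ v).trans ((h ξ).trans (by simp))

theorem rid_lTensor_rTensor_comul [Coalgebra k C] (p : C →ₗ[k] B) (f : Dual k C) (x : C) :
    TensorProduct.rid k B (f.lTensor B (p.rTensor C (comul x))) = p (leftHit f x) := by
  have : (TensorProduct.rid k B).toLinearMap ∘ₗ f.lTensor B ∘ₗ p.rTensor C =
      p ∘ₗ (TensorProduct.rid k C).toLinearMap ∘ₗ f.lTensor C := by
    ext; simp
  exact LinearMap.congr_fun this (comul x)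

end Corestriction

section InvariantFunctionals

variable {k C D B : Type u} [Field k] [AddCommGroup C] [Module k C] [Coalgebra k C]
  [AddCommGroup D] [Module k D] [Coalgebra k D] [AddCommGroup B] [Module k B] [One B]

/-- A functional `f` on `C` with `f(x₁)p(x₂) = f(x)1`, i.e. invariant under right translation along
`p : C → B`. -/
def IsRightInvariant (p : C →ₗ[k] B) (f : Dual k C) : Prop :=
  ∀ x, p (rightHit f x) = f x • (1 : B)

/-- A functional `f` on `C` with `p(x₁)f(x₂) = f(x)1`, i.e. invariant under left translation along
`p : C → B`. -/
def IsLeftInvariant (p : C →ₗ[k] B) (f : Dual k C) : Prop :=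
  ∀ x, p (leftHit f x) = f x • (1 : B)

theorem rightHit_map (q : C →ₗc[k] D) (f : Dual k D) (x : C) :
    rightHit f (q x) = q (rightHit (f ∘ₗ q.toLinearMap) x) := by
  have : (TensorProduct.lid k D).toLinearMap ∘ₗ f.rTensor D ∘ₗ map q.toLinearMap q.toLinearMap =
      q.toLinearMap ∘ₗ (TensorProduct.lid k C).toLinearMap ∘ₗ (f ∘ₗ q.toLinearMap).rTensor C := by
    ext; simp
  exact (congrArg (fun t => TensorProduct.lid k D (f.rTensor D t))
    (CoalgHomClass.map_comp_comul_apply q x).symm).trans (LinearMap.congr_fun this (comul x))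

theorem leftHit_map (q : C →ₗc[k] D) (f : Dual k D) (x : C) :
    leftHit f (q x) = q (leftHit (f ∘ₗ q.toLinearMap) x) :=
  dual_ext (k := k) fun g => by
    rw [apply_leftHit, rightHit_map]
    exact (apply_leftHit (g ∘ₗ q.toLinearMap) (f ∘ₗ q.toLinearMap) x).symm

theorem IsRightInvariant.comp_coalgHom {p : D →ₗ[k] B} {f : Dual k D} (hf : IsRightInvariant p f)
    (q : C →ₗc[k] D) : IsRightInvariant (p ∘ₗ q.toLinearMap) (f ∘ₗ q.toLinearMap) := fun x =>
  (congrArg p (rightHit_map q f x)).symm.trans (hf (q x))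

theorem IsLeftInvariant.comp_coalgHom {p : D →ₗ[k] B} {f : Dual k D} (hf : IsLeftInvariant p f)
    (q : C →ₗc[k] D) : IsLeftInvariant (p ∘ₗ q.toLinearMap) (f ∘ₗ q.toLinearMap) := fun x =>
  (congrArg p (leftHit_map q f x)).symm.trans (hf (q x))

end InvariantFunctionals

section QuotientSpaces

variable {k G B : Type u} [Field k] [Ring G] [Bialgebra k G] [AddCommGroup B] [Module k B] [One B]
  {p : G →ₗ[k] B} {f : Dual k G} {y : G}

theorem mem_quotientSpaceLeft_iff_cores :
    y ∈ quotientSpaceLeft k G p ↔ cores k G p comul y = y ⊗ₜ 1 :=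
  LinearMap.mem_ker.trans sub_eq_zero

theorem mem_quotientSpaceRight_iff_comul :
    y ∈ quotientSpaceRight k G p ↔ p.rTensor G (comul y) = 1 ⊗ₜ y :=
  LinearMap.mem_ker.trans sub_eq_zero

theorem mem_quotientSpaceLeft_iff :
    y ∈ quotientSpaceLeft k G p ↔ ∀ f : Dual k G, p (rightHit f y) = f y • (1 : B) :=
  mem_quotientSpaceLeft_iff_cores.trans cores_eq_tmul_iff

theorem mem_quotientSpaceRight_iff :
    y ∈ quotientSpaceRight k G p ↔ ∀ f : Dual k G, p (leftHit f y) = f y • (1 : B) := by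
  rw [mem_quotientSpaceRight_iff_comul]
  refine ⟨fun h f => ?_, fun h => ext_rid_lTensor fun f => ?_⟩
  · rw [← rid_lTensor_rTensor_comul, h]; simp
  · rw [rid_lTensor_rTensor_comul, h]; simp

theorem rightHit_mem_quotientSpaceLeft (f : Dual k G) (hy : y ∈ quotientSpaceLeft k G p) :
    rightHit f y ∈ quotientSpaceLeft k G p :=
  mem_quotientSpaceLeft_iff.2 fun g => by
    rw [isComod_comul.rightHit_matrixCoeff, mem_quotientSpaceLeft_iff.1 hy]; rfl

theorem leftHit_mem_quotientSpaceRight (f : Dual k G) (hy : y ∈ quotientSpaceRight k G p) :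
    leftHit f y ∈ quotientSpaceRight k G p :=
  mem_quotientSpaceRight_iff.2 fun g => by
    rw [isComod_comul.dualAct_dualAct, mem_quotientSpaceRight_iff.1 hy]; rfl

theorem IsRightInvariant.rightHit_mem (hf : IsRightInvariant p f) (x : G) :
    rightHit f x ∈ quotientSpaceRight k G p :=
  mem_quotientSpaceRight_iff.2 fun g => by
    rw [isComod_comul.leftHit_matrixCoeff, hf, apply_leftHit]

theorem IsLeftInvariant.leftHit_mem (hf : IsLeftInvariant p f) (x : G) :
    leftHit f x ∈ quotientSpaceLeft k G p :=
  mem_quotientSpaceLeft_iff.2 fun g => by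
    rw [← isComod_comul.leftHit_matrixCoeff, hf, ← apply_leftHit]

end QuotientSpaces

section AlgebraQuotient

variable {k G H : Type u} [Field k] [Ring G] [Bialgebra k G] [Ring H] [Algebra k H]
  {p : G →ₐ[k] H} {f : Dual k G} {y : G}

theorem IsRightInvariant.comp_mulRight (hf : IsRightInvariant p.toLinearMap f)
    (hy : y ∈ quotientSpaceLeft k G p.toLinearMap) :
    IsRightInvariant p.toLinearMap (f ∘ₗ LinearMap.mulRight k y) := fun x => by
  have hslice : (TensorProduct.lid k H).toLinearMap ∘ₗ (f ∘ₗ LinearMap.mulRight k y).rTensor H =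
      (TensorProduct.lid k H).toLinearMap ∘ₗ f.rTensor H ∘ₗ
        LinearMap.mulRight k (y ⊗ₜ[k] (1 : H)) := by
    ext; simp
  have hcores : cores k G p.toLinearMap comul (x * y) =
      cores k G p.toLinearMap comul x * (y ⊗ₜ[k] (1 : H)) := by
    rw [← mem_quotientSpaceLeft_iff_cores.1 hy, cores, LinearMap.comp_apply, Bialgebra.comul_mul]
    exact map_mul (Algebra.TensorProduct.map (AlgHom.id k G) p) _ _
  calc p (rightHit (f ∘ₗ LinearMap.mulRight k y) x)
      = matrixCoeff (cores k G p.toLinearMap comul) (f ∘ₗ LinearMap.mulRight k y) x :=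
        (matrixCoeff_cores p.toLinearMap comul (f ∘ₗ LinearMap.mulRight k y) x).symm
    _ = matrixCoeff (cores k G p.toLinearMap comul) f (x * y) := by
        simp only [matrixCoeff, LinearMap.comp_apply, hcores]
        exact LinearMap.congr_fun hslice (cores k G p.toLinearMap comul x)
    _ = f (x * y) • (1 : H) := (matrixCoeff_cores p.toLinearMap comul f (x * y)).trans (hf _)

theorem IsLeftInvariant.comp_mulLeft (hf : IsLeftInvariant p.toLinearMap f)
    (hy : y ∈ quotientSpaceRight k G p.toLinearMap) :
    IsLeftInvariant p.toLinearMap (f ∘ₗ LinearMap.mulLeft k y) := fun x => by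
  have hslice : (TensorProduct.rid k H).toLinearMap ∘ₗ (f ∘ₗ LinearMap.mulLeft k y).lTensor H =
      (TensorProduct.rid k H).toLinearMap ∘ₗ f.lTensor H ∘ₗ
        LinearMap.mulLeft k ((1 : H) ⊗ₜ[k] y) := by
    ext; simp
  have hcomul : p.toLinearMap.rTensor G (comul (y * x)) =
      ((1 : H) ⊗ₜ[k] y) * p.toLinearMap.rTensor G (comul x) := by
    rw [← mem_quotientSpaceRight_iff_comul.1 hy, Bialgebra.comul_mul]
    exact map_mul (Algebra.TensorProduct.map p (AlgHom.id k G)) _ _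
  calc p (leftHit (f ∘ₗ LinearMap.mulLeft k y) x)
      = TensorProduct.rid k H ((f ∘ₗ LinearMap.mulLeft k y).lTensor H
          (p.toLinearMap.rTensor G (comul x))) :=
        (rid_lTensor_rTensor_comul p.toLinearMap (f ∘ₗ LinearMap.mulLeft k y) x).symm
    _ = TensorProduct.rid k H (f.lTensor H (p.toLinearMap.rTensor G (comul (y * x)))) := by
        rw [hcomul]
        exact LinearMap.congr_fun hslice (p.toLinearMap.rTensor G (comul x))
    _ = f (y * x) • (1 : H) := (rid_lTensor_rTensor_comul p.toLinearMap f (y * x)).trans (hf _)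

end AlgebraQuotient

section Haar

variable {k C : Type u} [Field k] [AddCommGroup C] [Module k C] [Coalgebra k C] [One C]

/-- A normalized functional that is invariant under left and right translation: the analogue of
the Haar integral. -/
structure IsHaar (φ : Dual k C) : Prop where
  map_one : φ 1 = 1
  isRightInvariant : IsRightInvariant LinearMap.id φ
  isLeftInvariant : IsLeftInvariant LinearMap.id φ

namespace IsHaar

variable {φ f : Dual k C}

protected theorem apply_leftHit (hφ : IsHaar φ) (f : Dual k C) (x : C) :
    f (leftHit φ x) = φ x * f 1 := by
  rw [show leftHit φ x = φ x • (1 : C) from hφ.isLeftInvariant x, map_smul, smul_eq_mul]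

protected theorem apply_rightHit (hφ : IsHaar φ) (f : Dual k C) (x : C) :
    f (rightHit φ x) = φ x * f 1 := by
  rw [show rightHit φ x = φ x • (1 : C) from hφ.isRightInvariant x, map_smul, smul_eq_mul]

theorem apply_eq_mul_of_isRightInvariant (hφ : IsHaar φ) (hf : IsRightInvariant LinearMap.id f)
    (x : C) : f x = φ x * f 1 := by
  rw [← hφ.apply_leftHit, apply_leftHit,
    show rightHit f x = f x • (1 : C) from hf x, map_smul, hφ.map_one, smul_eq_mul, mul_one]

theorem apply_eq_mul_of_isLeftInvariant (hφ : IsHaar φ) (hf : IsLeftInvariant LinearMap.id f)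
    (x : C) : f x = φ x * f 1 := by
  rw [← hφ.apply_rightHit, ← apply_leftHit,
    show leftHit f x = f x • (1 : C) from hf x, map_smul, hφ.map_one, smul_eq_mul, mul_one]

end IsHaar

end Haar

section HaarHopf

variable {k G H : Type u} [Field k] [Ring G] [HopfAlgebra k G] {φ : Dual k G}

namespace IsHaar

theorem counit_eq_of_apply_mul_right (hφ : IsHaar φ) {B : Submodule k G}
    (hB : ∀ f : Dual k G, ∀ y ∈ B, rightHit f y ∈ B)
    (hmul : ∀ x, ∀ y ∈ B, φ (x * y) = φ x * φ y) {y : G} (hy : y ∈ B) : counit y = φ y := by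
  obtain ⟨t, ht⟩ := mem_range_lTensor_subtype_iff.2 (fun f => hB f y hy)
  have hsplit : φ ∘ₗ LinearMap.mul' k G ∘ₗ (antipode k).rTensor G ∘ₗ B.subtype.lTensor G =
      (φ ∘ₗ antipode k) ∘ₗ (TensorProduct.rid k G).toLinearMap ∘ₗ φ.lTensor G ∘ₗ
        B.subtype.lTensor G := by
    ext x b
    simpa [mul_comm] using! hmul (antipode k x) b b.2
  calc counit y = φ (algebraMap k G (counit y)) := by
        rw [Algebra.algebraMap_eq_smul_one, map_smul, hφ.map_one, smul_eq_mul, mul_one]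
    _ = φ (LinearMap.mul' k G ((antipode k).rTensor G (comul y))) := by
        rw [mul_antipode_rTensor_comul_apply]
    _ = (φ ∘ₗ antipode k) (leftHit φ y) := by
        simpa only [LinearMap.comp_apply, ht] using! LinearMap.congr_fun hsplit t
    _ = φ y := by rw [hφ.apply_leftHit, LinearMap.comp_apply, antipode_one, hφ.map_one, mul_one]

theorem counit_eq_of_apply_mul_left (hφ : IsHaar φ) {B : Submodule k G}
    (hB : ∀ f : Dual k G, ∀ y ∈ B, leftHit f y ∈ B)
    (hmul : ∀ x, ∀ y ∈ B, φ (y * x) = φ y * φ x) {y : G} (hy : y ∈ B) : counit y = φ y := by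
  obtain ⟨t, ht⟩ := mem_range_rTensor_subtype_iff.2 (fun f => hB f y hy)
  have hsplit : φ ∘ₗ LinearMap.mul' k G ∘ₗ (antipode k).lTensor G ∘ₗ B.subtype.rTensor G =
      (φ ∘ₗ antipode k) ∘ₗ (TensorProduct.lid k G).toLinearMap ∘ₗ φ.rTensor G ∘ₗ
        B.subtype.rTensor G := by
    ext b x
    simpa using! hmul (antipode k x) b b.2
  calc counit y = φ (algebraMap k G (counit y)) := by
        rw [Algebra.algebraMap_eq_smul_one, map_smul, hφ.map_one, smul_eq_mul, mul_one]
    _ = φ (LinearMap.mul' k G ((antipode k).lTensor G (comul y))) := by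
        rw [mul_antipode_lTensor_comul_apply]
    _ = (φ ∘ₗ antipode k) (rightHit φ y) := by
        simpa only [LinearMap.comp_apply, ht] using! LinearMap.congr_fun hsplit t
    _ = φ y := by rw [hφ.apply_rightHit, LinearMap.comp_apply, antipode_one, hφ.map_one, mul_one]

theorem eq_smul_one_of_apply_mul_right (hφ : IsHaar φ) {B : Submodule k G}
    (hB : ∀ f : Dual k G, ∀ y ∈ B, rightHit f y ∈ B)
    (hmul : ∀ x, ∀ y ∈ B, φ (x * y) = φ x * φ y) {y : G} (hy : y ∈ B) : y = φ y • (1 : G) :=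
  dual_ext (k := k) fun f => by
    rw [← counit_rightHit, hφ.counit_eq_of_apply_mul_right hB hmul (hB f y hy),
      ← apply_leftHit, hφ.apply_leftHit, map_smul, smul_eq_mul]

theorem eq_smul_one_of_apply_mul_left (hφ : IsHaar φ) {B : Submodule k G}
    (hB : ∀ f : Dual k G, ∀ y ∈ B, leftHit f y ∈ B)
    (hmul : ∀ x, ∀ y ∈ B, φ (y * x) = φ y * φ x) {y : G} (hy : y ∈ B) : y = φ y • (1 : G) :=
  dual_ext (k := k) fun f => by
    rw [← counit_leftHit, hφ.counit_eq_of_apply_mul_left hB hmul (hB f y hy),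
      apply_leftHit, hφ.apply_rightHit, map_smul, smul_eq_mul]

variable [Ring H] [Algebra k H] {p : G →ₐ[k] H}

theorem quotientSpaceLeft_eq_span_one (hφ : IsHaar φ)
    (hp : ∀ f : Dual k G, IsRightInvariant p.toLinearMap f → IsRightInvariant LinearMap.id f) :
    quotientSpaceLeft k G p.toLinearMap = Submodule.span k {(1 : G)} := by
  have hφp : IsRightInvariant p.toLinearMap φ := fun x => by
    simpa using congrArg p (hφ.isRightInvariant x)
  have hmul (x : G) : ∀ y ∈ quotientSpaceLeft k G p.toLinearMap, φ (x * y) = φ x * φ y :=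
    fun y hy => by simpa using hφ.apply_eq_mul_of_isRightInvariant (hp _ (hφp.comp_mulRight hy)) x
  refine le_antisymm (fun y hy => Submodule.mem_span_singleton.2 ⟨φ y, ?_⟩)
    ((Submodule.span_singleton_le_iff_mem ..).2 ?_)
  · exact (hφ.eq_smul_one_of_apply_mul_right
      (fun f _ => rightHit_mem_quotientSpaceLeft f) hmul hy).symm
  · exact mem_quotientSpaceLeft_iff_cores.2 (by simp [cores, Algebra.TensorProduct.one_def])

theorem quotientSpaceRight_eq_span_one (hφ : IsHaar φ)
    (hp : ∀ f : Dual k G, IsLeftInvariant p.toLinearMap f → IsLeftInvariant LinearMap.id f) :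
    quotientSpaceRight k G p.toLinearMap = Submodule.span k {(1 : G)} := by
  have hφp : IsLeftInvariant p.toLinearMap φ := fun x => by
    simpa using congrArg p (hφ.isLeftInvariant x)
  have hmul (x : G) : ∀ y ∈ quotientSpaceRight k G p.toLinearMap, φ (y * x) = φ y * φ x :=
    fun y hy => by
      simpa [mul_comm] using
        hφ.apply_eq_mul_of_isLeftInvariant (hp _ (hφp.comp_mulLeft hy)) x
  refine le_antisymm (fun y hy => Submodule.mem_span_singleton.2 ⟨φ y, ?_⟩)
    ((Submodule.span_singleton_le_iff_mem ..).2 ?_)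
  · exact (hφ.eq_smul_one_of_apply_mul_left
      (fun f _ => leftHit_mem_quotientSpaceRight f) hmul hy).symm
  · exact mem_quotientSpaceRight_iff_comul.2 (by simp [Algebra.TensorProduct.one_def])

end IsHaar

end HaarHopf

section Quotient

variable {k G K B : Type u} [Field k] [Ring G] [AddCommGroup K] [Module k K] [One K]

theorem map_eq_counit_smul_one [Bialgebra k G] {A : Submodule k G} (hA : (1 : G) ∈ A)
    {q : G →ₗ[k] K} (hq : q 1 = 1)
    (hker : leftIdealGen k (A ⊓ LinearMap.ker (counit (R := k) (A := G))) ≤ LinearMap.ker q)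
    {a : G} (ha : a ∈ A) : q a = counit (R := k) a • (1 : K) := by
  have hmem : a - counit (R := k) a • (1 : G) ∈
      A ⊓ LinearMap.ker (counit (R := k) (A := G)) :=
    ⟨A.sub_mem ha (A.smul_mem _ hA), by simp⟩
  have := hker (Submodule.subset_span ⟨1, _, hmem, (one_mul _).symm⟩)
  rwa [LinearMap.mem_ker, map_sub, map_smul, hq, sub_eq_zero] at this

variable [Coalgebra k K]

theorem IsSupportIdempotent.exists_isHaar [HopfAlgebra k G] {A : Submodule k G} {φ : Dual k G}
    (hφ : IsSupportIdempotent A φ) (hA : IsHopfSubalgebra k G A) {q : G →ₗc[k] K}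
    (hsurj : Function.Surjective q) (hq : q 1 = 1)
    (hker : LinearMap.ker q.toLinearMap =
      leftIdealGen k (A ⊓ LinearMap.ker (counit (R := k) (A := G)))) :
    ∃ ψ : Dual k K, IsHaar ψ := by
  have hφker : φ ∈ (LinearMap.ker q.toLinearMap).dualAnnihilator := by
    rw [Submodule.mem_dualAnnihilator, hker]
    refine fun x hx => Submodule.span_le (p := LinearMap.ker φ) |>.2 ?_ hx
    rintro _ ⟨g, a, ⟨ha, hεa⟩, rfl⟩
    rw [SetLike.mem_coe, LinearMap.mem_ker, hφ.apply_mul hA g ha, LinearMap.mem_ker.1 hεa,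
      mul_zero]
  rw [← LinearMap.range_dualMap_eq_dualAnnihilator_ker] at hφker
  obtain ⟨ψ, rfl⟩ := hφker
  have hqA {a : G} (ha : a ∈ A) : q a = counit (R := k) a • (1 : K) :=
    map_eq_counit_smul_one hA.1 (q := q.toLinearMap) hq hker.ge ha
  refine ⟨ψ, ?_, hsurj.forall.2 fun x => ?_, hsurj.forall.2 fun x => ?_⟩
  · simpa [hq] using hφ.apply_eq_counit hA.1
  · rw [rightHit_map]
    exact (hqA (hφ.isProj.map_mem x)).trans (by rw [counit_rightHit]; rfl)
  · rw [leftHit_map]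
    refine (hqA ?_).trans (by rw [counit_leftHit]; rfl)
    exact hφ.leftHit_eq_rightHit ▸ hφ.isProj.map_mem x

variable [AddCommGroup B] [Module k B] [One B] [Bialgebra k G] {q : G →ₗc[k] K} {p : K →ₗ[k] B}
  {f : Dual k K}

theorem IsRightInvariant.of_quotientSpaceRight (hsurj : Function.Surjective q)
    (hq : ∀ a ∈ quotientSpaceRight k G (p ∘ₗ q.toLinearMap), q a = counit (R := k) a • (1 : K))
    (hf : IsRightInvariant p f) : IsRightInvariant LinearMap.id f :=
  hsurj.forall.2 fun x => by
    rw [rightHit_map]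
    exact (hq _ ((hf.comp_coalgHom q).rightHit_mem x)).trans (by rw [counit_rightHit]; rfl)

theorem IsLeftInvariant.of_quotientSpaceLeft (hsurj : Function.Surjective q)
    (hq : ∀ a ∈ quotientSpaceLeft k G (p ∘ₗ q.toLinearMap), q a = counit (R := k) a • (1 : K))
    (hf : IsLeftInvariant p f) : IsLeftInvariant LinearMap.id f :=
  hsurj.forall.2 fun x => by
    rw [leftHit_map]
    exact (hq _ ((hf.comp_coalgHom q).leftHit_mem x)).trans (by rw [counit_leftHit]; rfl)

end Quotient

section SimpleComodules

variable {k C V B : Type u} [Field k] [AddCommGroup V] [Module k V]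

theorem IsSimpleComod.coact_eq_tmul [AddCommGroup C] [Module k C] [Coalgebra k C]
    {ρ : V →ₗ[k] V ⊗[k] C} (hρ : IsSimpleComod k C ρ) {v : V} (hv₀ : v ≠ 0) {g : C}
    (hv : ρ v = v ⊗ₜ g) (w : V) : ρ w = w ⊗ₜ g := by
  have hsub : IsSubcomod k C ρ (Submodule.span k {v}) := fun u hu => by
    obtain ⟨c, rfl⟩ := Submodule.mem_span_singleton.1 hu
    exact ⟨⟨_, hu⟩ ⊗ₜ g, by simp [hv, smul_tmul']⟩
  have htop : Submodule.span k {v} = ⊤ :=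
    (hρ.2.2 _ le_top hsub).resolve_left (Submodule.span_singleton_eq_bot.not.2 hv₀)
  obtain ⟨c, rfl⟩ := Submodule.mem_span_singleton.1 (htop ▸ Submodule.mem_top : w ∈ _)
  rw [map_smul, hv, smul_tmul']

theorem IsComod.coact_eq_tmul_one [Ring C] [Bialgebra k C] [AddCommGroup B] [Module k B] [One B]
    {ρ : V →ₗ[k] V ⊗[k] C} (hρ : IsComod k C ρ) {p : C →ₗ[k] B}
    (hp : quotientSpaceLeft k C p = Submodule.span k {(1 : C)}) {v : V}
    (hv : cores k C p ρ v = v ⊗ₜ 1) : ρ v = v ⊗ₜ 1 := by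
  have hcoeff (ξ : Dual k V) : matrixCoeff ρ ξ v = ξ v • (1 : C) := by
    have hmem : matrixCoeff ρ ξ v ∈ quotientSpaceLeft k C p :=
      mem_quotientSpaceLeft_iff.2 fun f => by
        rw [hρ.rightHit_matrixCoeff, cores_eq_tmul_iff.1 hv]; rfl
    obtain ⟨c, hc⟩ := Submodule.mem_span_singleton.1 (hp ▸ hmem)
    have hε : Coalgebra.counit (R := k) (matrixCoeff ρ ξ v) = ξ v := by
      rw [← apply_dualAct]; exact congrArg ξ (hρ.counit v)
    rw [← hε, ← hc, map_smul, Bialgebra.counit_one, smul_eq_mul, mul_one]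
  exact ext_lid_rTensor fun ξ => (hcoeff ξ).trans (by simp)

end SimpleComodules

end QG

open QG in
theorem statement_5_general (k : Type u) [Field k] (G H K : Type u) [Ring G] [HopfAlgebra k G]
    [Ring H] [Algebra k H] [Ring K] [HopfAlgebra k K] (hcss : IsCosemisimple k G)
    (q : G →ₗc[k] K) (hqsurj : Function.Surjective q) (hq : q 1 = 1) (p : K →ₐ[k] H)
    (hAeq : quotientSpaceLeft k G (p.toLinearMap ∘ₗ q.toLinearMap) =
      quotientSpaceRight k G (p.toLinearMap ∘ₗ q.toLinearMap))
    (hHopf : IsHopfSubalgebra k G (quotientSpaceLeft k G (p.toLinearMap ∘ₗ q.toLinearMap)))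
    (hker : LinearMap.ker q.toLinearMap =
      leftIdealGen k (quotientSpaceLeft k G (p.toLinearMap ∘ₗ q.toLinearMap) ⊓
        LinearMap.ker (Coalgebra.counit (R := k) (A := G)))) :
    (∀ X : SimpleComodule k K,
      (∃ v : X.V, v ≠ 0 ∧ cores k K p.toLinearMap X.ρ v = v ⊗ₜ[k] (1 : H)) →
      ∀ v : X.V, X.ρ v = v ⊗ₜ[k] (1 : K)) ∧
    quotientSpaceLeft k K p.toLinearMap = Submodule.span k {(1 : K)} ∧
    quotientSpaceRight k K p.toLinearMap = Submodule.span k {(1 : K)} := by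
  obtain ⟨φ, hφ⟩ := hcss.exists_isSupportIdempotent hHopf.2.2.1
  obtain ⟨ψ, hψ⟩ := hφ.exists_isHaar hHopf hqsurj hq hker
  have hqA : ∀ a ∈ quotientSpaceLeft k G (p.toLinearMap ∘ₗ q.toLinearMap),
      q a = Coalgebra.counit (R := k) a • (1 : K) :=
    fun _ => map_eq_counit_smul_one hHopf.1 (q := q.toLinearMap) hq hker.ge
  have hleft : quotientSpaceLeft k K p.toLinearMap = Submodule.span k {(1 : K)} :=
    hψ.quotientSpaceLeft_eq_span_one fun _ => .of_quotientSpaceRight hqsurj (hAeq ▸ hqA)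
  have hright : quotientSpaceRight k K p.toLinearMap = Submodule.span k {(1 : K)} :=
    hψ.quotientSpaceRight_eq_span_one fun _ => .of_quotientSpaceLeft hqsurj hqA
  refine ⟨fun X ⟨v, hv₀, hv⟩ => ?_, hleft, hright⟩
  exact X.isSimple.coact_eq_tmul hv₀ (X.isComod.coact_eq_tmul_one hleft hv)

open QG HopfAlgebra in
/-- With `π : O(G) → O(H)` surjective, `O(G)` cosemisimple,
`A := O(G/H) = O(H\G)` a Hopf subalgebra, and `O(K) := O(G)/O(G)A⁻` the
corresponding Hopf algebra quotient (given here as a Hopf algebra `K` with a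
surjection `q` of kernel `O(G)A⁻` through which `π` factors via `p`), every
simple right `O(K)`-comodule whose restriction to `O(H)` has a nonzero
invariant vector is trivial; equivalently `O(K/H) = O(H\K) = k`. -/
theorem statement_5 (k : Type u) [Field k] [IsAlgClosed k]
    (G H K : Type u) [Ring G] [HopfAlgebra k G] [Ring H] [HopfAlgebra k H]
    [Ring K] [HopfAlgebra k K]
    (π : G →ₐc[k] H) (hsurj : Function.Surjective π)
    (hcss : IsCosemisimple k G)
    (hAeq : quotientSpaceLeft k G (π : G →ₗ[k] H) =
      quotientSpaceRight k G (π : G →ₗ[k] H))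
    (hHopf : IsHopfSubalgebra k G (quotientSpaceLeft k G (π : G →ₗ[k] H)))
    (q : G →ₐc[k] K) (hqsurj : Function.Surjective q)
    (hker : LinearMap.ker (q : G →ₗ[k] K) =
      leftIdealGen k (quotientSpaceLeft k G (π : G →ₗ[k] H) ⊓
        LinearMap.ker (Coalgebra.counit (R := k) (A := G))))
    (p : K →ₐc[k] H) (hfact : p.comp q = π) :
    (∀ X : SimpleComodule k K,
      (∃ v : X.V, v ≠ 0 ∧ IsInvariant k H (cores k K (p : K →ₗ[k] H) X.ρ) v) →
      ∀ v : X.V, X.ρ v = v ⊗ₜ[k] (1 : K)) ∧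
    quotientSpaceLeft k K (p : K →ₗ[k] H) = Submodule.span k {(1 : K)} ∧
    quotientSpaceRight k K (p : K →ₗ[k] H) = Submodule.span k {(1 : K)} := by
  subst hfact
  exact statement_5_general k G H K hcss q hqsurj (map_one q) p hAeq hHopf hker
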